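/- Assume the Hypothesis. For p ≥ 0 define D_p := {t ∈ I : k_p(γ(t)) < ∞ and |⟨β_p(t), e_{k_p(γ(t))}^⊥⟩| > 2^{−p}} and D := ⋂_{n≥1} ⋃_{p≥n} D_p. Then D has Lebesgue measure zero. -/

import Mathlib

/-! For `p ≥ 1` the measure of `D_p` is at most `2^{-p}`, so the Borel–Cantelli lemma applies.

Fix `k` and put `v = e_k^⊥`. By Markov's inequality (`condExp_markov`), the part of `D_p` in
`{k_p = k}` has measure at most `2^p · 2 · sup_G |∫_G ⟨γ', v⟩|`, with `G` ranging over the events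
of `Σ_p` inside `{k_p = k}`. Such a `G` lies in `γ⁻¹(B_k)` and is determined by which of the sets
`γ⁻¹(B_j)`, `j < k`, contain the parameter (`Sig_invariant`, `kseq_congr`).

* If `C ⊆ B_k` is open and convex, then `|∫_{γ⁻¹(C)} ⟨γ', v⟩| ≤ 2ρ_k` (`plane_bound`). The cone
  conditions make `S = ⟨γ, e_k⟩` nondecreasing, and each slice of `C` parallel to `e_k` is an
  interval; so for each height `y` the times `t` at which the point of the slice line with abscissa
  `S t` belongs to `C` form an interval. The signed number of crossings of the height `y` by
  `F = ⟨γ, v⟩` during an interval of time is `-1`, `0` or `1`, and the signed crossing number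
  integrates over `y` to `∫ F'`; only heights in an interval of length `2ρ_k` contribute. In
  `node_bound` the time interval is discretized, so that the crossing count becomes a telescoping
  sum, and `curve_bound` passes to the limit.
* Writing `G ∖ B_j` as a difference turns a set determined by `n` membership conditions into
  intersections of tubes, at the cost of a factor `3` for each condition (`patt_bound`). Such
  intersections are convex, so `|∫_G ⟨γ', v⟩| ≤ 3^k · 2ρ_k` (`Sig_bound`).

Since `k_p ≥ p`, summing over `k ≥ p` gives `|D_p| ≤ 4 · 2^p ∑_{k ≥ p} 3^k ρ_k ≤ 2^{-p}`.
-/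

open MeasureTheory Filter Metric Set Topology RealInnerProductSpace

noncomputable section

/-- The Euclidean plane. -/
abbrev E2 := EuclideanSpace ℝ (Fin 2)

/-- Rotation of a planar vector by `π/2`. -/
def perp (v : E2) : E2 := (WithLp.equiv 2 (Fin 2 → ℝ)).symm ![-(v 1), v 0]

/-- The cone `C(w,α) = {v ∈ S¹ : ⟨v,w⟩ ≥ 1 − α}`. -/
def cone (w : E2) (α : ℝ) : Set E2 :=
  {v ∈ sphere (0:E2) 1 | 1 - α ≤ ⟪v, w⟫}

/-- The line `x + ℝe`. -/
def line (x e : E2) : Set E2 := {y | ∃ t : ℝ, y = x + t • e}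

/-- `kseq B p z` is `k_p(z)`: `k_0(z) = 0` and `k_p(z)` is the least index `k > k_{p−1}(z)`
with `z ∈ B k` (`∞` if there is none). -/
def kseq (B : ℕ → Set E2) : ℕ → E2 → ℕ∞
  | 0 => fun _ => 0
  | p + 1 => fun z =>
      sInf {m : ℕ∞ | ∃ k : ℕ, m = (k : ℕ∞) ∧ kseq B p z < (k : ℕ∞) ∧ z ∈ B k}

/-- `Σ_p`: the smallest σ-algebra on the parameter space making `k_0∘γ, …, k_p∘γ`
measurable. -/
def Sig (B : ℕ → Set E2) (γ : ℝ → E2) (p : ℕ) : MeasurableSpace ℝ :=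
  ⨆ q ∈ Finset.range (p + 1), MeasurableSpace.comap (fun t => kseq B q (γ t)) ⊤

/-- `β_p = E[γ' | Σ_p]`, the conditional expectation of `γ'` given `Σ_p` with respect to
Lebesgue measure on `I = [a,b]`. -/
def beta (B : ℕ → Set E2) (γ γ' : ℝ → E2) (a b : ℝ) (p : ℕ) : ℝ → E2 :=
  (volume.restrict (Set.Icc a b))[(fun t => γ' t)|Sig B γ p]

/-! ### Change of variables and the horizontal-slicing bound -/

/-- The substitution `y = F t` for the indicator of an open set, without monotonicity of `F`;
obtained from the continuous case by approximating the indicator. -/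
theorem cov_open {F F' : ℝ → ℝ} (hF : ∀ t, HasDerivAt F (F' t) t) (hF' : Continuous F')
    {E : Set ℝ} (hE : IsOpen E) (p q : ℝ) :
    ∫ t in p..q, E.indicator (fun _ => (1:ℝ)) (F t) * F' t
      = ∫ y in F p..F q, E.indicator (fun _ => (1:ℝ)) y := by
  have hFc : Continuous F := continuous_iff_continuousAt.2 fun t => (hF t).continuousAt
  set h : ℕ → ℝ → ℝ := fun n y => 1 - ((hE.isClosed_compl.apprSeq n y : NNReal) : ℝ) with hh
  have hc : ∀ n, Continuous (h n) := fun n => by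
    have := (hE.isClosed_compl.apprSeq n).continuous
    fun_prop
  have hle : ∀ n y, ‖h n y‖ ≤ 1 := fun n y => by
    have h1 : ((hE.isClosed_compl.apprSeq n y : NNReal) : ℝ) ≤ 1 := by
      exact_mod_cast HasOuterApproxClosed.apprSeq_apply_le_one hE.isClosed_compl n y
    have h0 : (0:ℝ) ≤ (hE.isClosed_compl.apprSeq n y : NNReal) := NNReal.coe_nonneg _
    rw [Real.norm_eq_abs, abs_le]
    constructor <;> simp only [hh] <;> linarith
  have hlim : ∀ y, Tendsto (fun n => h n y) atTop (𝓝 (E.indicator (fun _ => (1:ℝ)) y)) := by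
    intro y
    have h1 := (tendsto_pi_nhds.1 (HasOuterApproxClosed.tendsto_apprSeq hE.isClosed_compl)) y
    have h2 := (NNReal.tendsto_coe.2 h1).const_sub 1
    convert h2 using 2
    by_cases hy : y ∈ E <;> simp [hy]
  have hcov : ∀ n, ∫ t in p..q, h n (F t) * F' t = ∫ y in F p..F q, h n y := fun n =>
    intervalIntegral.integral_comp_mul_deriv (fun x _ => hF x) hF'.continuousOn (hc n)
  have hL : Tendsto (fun n => ∫ t in p..q, h n (F t) * F' t) atTop
      (𝓝 (∫ t in p..q, E.indicator (fun _ => (1:ℝ)) (F t) * F' t)) := by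
    refine intervalIntegral.tendsto_integral_filter_of_dominated_convergence (fun t => ‖F' t‖)
      (Eventually.of_forall fun n => ?_) (Eventually.of_forall fun n => ?_) ?_ ?_
    · have := hc n
      exact Continuous.aestronglyMeasurable (by fun_prop)
    · refine Eventually.of_forall fun t _ => ?_
      rw [norm_mul]
      exact mul_le_of_le_one_left (norm_nonneg _) (hle n _)
    · exact hF'.norm.intervalIntegrable _ _
    · exact Eventually.of_forall fun t _ => (hlim (F t)).mul_const _
  have hR : Tendsto (fun n => ∫ y in F p..F q, h n y) atTop
      (𝓝 (∫ y in F p..F q, E.indicator (fun _ => (1:ℝ)) y)) := by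
    refine intervalIntegral.tendsto_integral_filter_of_dominated_convergence (fun t => 1)
      (Eventually.of_forall fun n => ?_) (Eventually.of_forall fun n => ?_) ?_ ?_
    · exact (hc n).aestronglyMeasurable
    · exact Eventually.of_forall fun t _ => hle n _
    · exact intervalIntegrable_const
    · exact Eventually.of_forall fun t _ => hlim t
  simp only [hcov] at hL
  exact tendsto_nhds_unique hL hR

/-- The value at `y` of the indicator function of `(-∞, s]`. -/
def step (y s : ℝ) : ℝ := if y ≤ s then 1 else 0

theorem integral_eq_step {g : ℝ → ℝ} (u v : ℝ) :
    ∫ y in u..v, g y = ∫ y, g y * (step y v - step y u) := by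
  rcases le_total u v with h | h
  · rw [intervalIntegral.integral_of_le h, ← integral_indicator measurableSet_Ioc]
    congr 1 with y
    simp only [indicator, step, mem_Ioc]
    split_ifs <;> first | (simp; done) | grind
  · rw [intervalIntegral.integral_of_ge h, ← integral_indicator measurableSet_Ioc, ← integral_neg]
    congr 1 with y
    simp only [indicator, step, mem_Ioc]
    split_ifs <;> first | (simp; done) | grind

/-- The increments of `u` over pairs of consecutive members of an order-convex set `A` telescope
to a single difference; when `N ∈ A` its upper end is `N`, which is what the induction needs. -/
theorem telescope (A : ℕ → Prop) [DecidablePred A] (hA : ∀ i j k, i ≤ j → j ≤ k → A i → A k → A j)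
    (u : ℕ → ℝ) (N : ℕ) :
    (¬ A N → ∃ i j, ∑ m ∈ Finset.range N, (if A m ∧ A (m+1) then u (m+1) - u m else 0) = u j - u i)
    ∧ (A N → ∃ i,
      ∑ m ∈ Finset.range N, (if A m ∧ A (m+1) then u (m+1) - u m else 0) = u N - u i) := by
  induction N with
  | zero => exact ⟨fun _ => ⟨0, 0, by simp⟩, fun _ => ⟨0, by simp⟩⟩
  | succ N ih =>
    rw [Finset.sum_range_succ]
    refine ⟨fun hN => ?_, fun hN => ?_⟩
    · simp only [hN, and_false, if_false, add_zero]
      by_cases h : A N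
      · obtain ⟨i, hi⟩ := ih.2 h
        exact ⟨i, N, hi⟩
      · exact ih.1 h
    · by_cases h : A N
      · obtain ⟨i, hi⟩ := ih.2 h
        refine ⟨i, ?_⟩
        rw [hi]; simp [h, hN]
      · refine ⟨N + 1, ?_⟩
        rw [Finset.sum_eq_zero]
        · simp [h]
        · intro m hm
          rw [if_neg]
          rintro ⟨h1, -⟩
          exact h (hA m N (N+1) (Finset.mem_range.1 hm).le N.le_succ h1 hN)

/-- The signed number of crossings of the height `y` along a block of consecutive indices is at most
`1` in absolute value. -/
theorem telescope_abs (A : ℕ → Prop) [DecidablePred A]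
    (hA : ∀ i j k, i ≤ j → j ≤ k → A i → A k → A j) (y : ℝ) (v : ℕ → ℝ) (N : ℕ) :
    |∑ m ∈ Finset.range N, (if A m ∧ A (m+1) then step y (v (m+1)) - step y (v m) else 0)| ≤ 1 := by
  have : ∃ i j, ∑ m ∈ Finset.range N,
      (if A m ∧ A (m+1) then step y (v (m+1)) - step y (v m) else 0)
        = step y (v j) - step y (v i) := by
    by_cases h : A N
    · obtain ⟨i, hi⟩ := (telescope A hA (fun m => step y (v m)) N).2 h
      exact ⟨i, N, hi⟩
    · exact (telescope A hA (fun m => step y (v m)) N).1 h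
  obtain ⟨i, j, h⟩ := this
  rw [h]
  simp only [step]
  split_ifs <;> norm_num

/-- The `m`-th point of the partition of `[a, b]` into `N` intervals of equal length. -/
def node (a b : ℝ) (N m : ℕ) : ℝ := a + (b - a) * m / N

/-- Discretized form of `curve_bound`: on each partition interval the condition `(S t, F t) ∈ P` is
replaced by membership in `P` of the points at height `F t` with the abscissas of both endpoints. -/
theorem node_bound {F F' S : ℝ → ℝ} (hF : ∀ t, HasDerivAt F (F' t) t) (hF' : Continuous F')
    {a b : ℝ} (hab : a < b) (hmono : MonotoneOn S (Icc a b)) {P : Set (ℝ × ℝ)} (hPo : IsOpen P)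
    (hPc : Convex ℝ P) {c ρ : ℝ} (hρ : 0 ≤ ρ) (hPs : ∀ z ∈ P, |z.2 - c| < ρ)
    (N : ℕ) (hN : 0 < N) (φ : ℝ → ℝ)
    (hφ : ∀ m < N, ∀ t ∈ Ioc (node a b N m) (node a b N (m+1)),
      φ t = {y | (S (node a b N m), y) ∈ P ∧ (S (node a b N (m+1)), y) ∈ P}.indicator
        (fun _ => (1:ℝ)) (F t) * F' t) :
    IntervalIntegrable φ volume a b ∧ |∫ t in a..b, φ t| ≤ 2 * ρ := by
  classical
  have hFc : Continuous F := continuous_iff_continuousAt.2 fun t => (hF t).continuousAt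
  set τ := node a b N with hτ
  have hN' : (0:ℝ) < N := by exact_mod_cast hN
  have hτ0 : τ 0 = a := by simp [hτ, node]
  have hτN : τ N = b := by simp only [hτ, node]; field_simp; ring
  have hτm : Monotone τ := fun i j hij => by
    have : (i:ℝ) ≤ j := by exact_mod_cast hij
    have h2 : 0 ≤ b - a := by linarith
    simp only [hτ, node]; gcongr
  have hτI : ∀ m ≤ N, τ m ∈ Icc a b := fun m hm =>
    ⟨hτ0 ▸ hτm zero_le, hτN ▸ hτm hm⟩
  set E : ℕ → Set ℝ := fun m => {y | (S (τ m), y) ∈ P ∧ (S (τ (m+1)), y) ∈ P} with hE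
  have hEo : ∀ m, IsOpen (E m) := fun m =>
    (hPo.preimage (by fun_prop : Continuous fun y : ℝ => (S (τ m), y))).inter
      (hPo.preimage (by fun_prop : Continuous fun y : ℝ => (S (τ (m+1)), y)))
  have hEs : ∀ m, E m ⊆ Ioo (c - ρ) (c + ρ) := fun m y hy => by
    have := abs_lt.1 (hPs _ hy.1)
    constructor <;> linarith
  have hint0 : ∀ m, IntervalIntegrable (fun t => (E m).indicator (fun _ => (1:ℝ)) (F t) * F' t)
      volume (τ m) (τ (m+1)) := fun m => by
    refine (hF'.intervalIntegrable _ _).mono_fun ?_ ?_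
    · exact (((measurable_const.indicator (hEo m).measurableSet).comp hFc.measurable).mul
        hF'.measurable).aestronglyMeasurable
    · refine Eventually.of_forall fun t => ?_
      simp only [norm_mul]
      refine mul_le_of_le_one_left (norm_nonneg _) ?_
      simp only [indicator]; split_ifs <;> simp
  have hint : ∀ m < N, IntervalIntegrable φ volume (τ m) (τ (m+1)) := fun m hm => by
    refine (hint0 m).congr fun t ht => ?_
    rw [uIoc_of_le (hτm m.le_succ)] at ht
    exact (hφ m hm t ht).symm
  refine ⟨by simpa [hτ0, hτN] using IntervalIntegrable.trans_iterate hint, ?_⟩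
  have hsum := intervalIntegral.sum_integral_adjacent_intervals hint
  rw [hτ0, hτN] at hsum
  rw [← hsum]
  have hpiece : ∀ m ∈ Finset.range N, ∫ t in τ m..τ (m+1), φ t
      = ∫ y, (E m).indicator (fun _ => (1:ℝ)) y * (step y (F (τ (m+1))) - step y (F (τ m))) := by
    intro m hm
    rw [← integral_eq_step, ← cov_open hF hF' (hEo m)]
    refine intervalIntegral.integral_congr_ae (Eventually.of_forall fun t ht => ?_)
    rw [uIoc_of_le (hτm m.le_succ)] at ht
    exact hφ m (Finset.mem_range.1 hm) t ht
  have hstepm : ∀ s, Measurable fun y => step y s := fun s =>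
    Measurable.ite measurableSet_Iic measurable_const measurable_const
  have hstepb : ∀ y s s', |step y s - step y s'| ≤ 1 := fun y s s' => by
    simp only [step]; split_ifs <;> norm_num
  have hiI : Integrable ((Ioo (c - ρ) (c + ρ)).indicator fun _ => (1:ℝ)) :=
    (integrable_indicator_iff measurableSet_Ioo).2 (integrableOn_const (by simp))
  have hi : ∀ m ∈ Finset.range N, Integrable fun y =>
      (E m).indicator (fun _ => (1:ℝ)) y * (step y (F (τ (m+1))) - step y (F (τ m))) := by
    intro m _
    refine hiI.mono' ?_ (Eventually.of_forall fun y => ?_)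
    · exact ((measurable_const.indicator (hEo m).measurableSet).mul
        ((hstepm _).sub (hstepm _))).aestronglyMeasurable
    · by_cases hy : y ∈ E m
      · simpa [hy, hEs m hy] using hstepb _ _ _
      · simp only [hy, not_false_eq_true, indicator_of_notMem, zero_mul, norm_zero]
        exact indicator_nonneg (fun _ _ => zero_le_one) _
  rw [Finset.sum_congr rfl hpiece, ← integral_finsetSum _ hi, ← Real.norm_eq_abs]
  have hb : ∀ y, ‖∑ m ∈ Finset.range N, (E m).indicator (fun _ => (1:ℝ)) y *
      (step y (F (τ (m+1))) - step y (F (τ m)))‖ ≤ (Ioo (c - ρ) (c + ρ)).indicator (fun _ => (1:ℝ)) y := by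
    intro y
    by_cases hy : y ∈ Ioo (c - ρ) (c + ρ)
    · rw [indicator_of_mem hy, Real.norm_eq_abs]
      have := telescope_abs (fun m => (S (τ (min m N)), y) ∈ P) ?_ y (fun m => F (τ m)) N
      · refine le_trans (le_of_eq ?_) this
        congr 1
        refine Finset.sum_congr rfl fun m hm => ?_
        have h1 : min m N = m := by have := Finset.mem_range.1 hm; omega
        have h2 : min (m+1) N = m+1 := by have := Finset.mem_range.1 hm; omega
        rw [h1, h2]
        simp only [hE, indicator, mem_ofPred_eq]
        split_ifs <;> simp
      · intro i j k hij hjk hi hk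
        have h1 : S (τ (min i N)) ≤ S (τ (min j N)) := hmono (hτI _ (min_le_right _ _))
          (hτI _ (min_le_right _ _)) (hτm (by omega))
        have h2 : S (τ (min j N)) ≤ S (τ (min k N)) := hmono (hτI _ (min_le_right _ _))
          (hτI _ (min_le_right _ _)) (hτm (by omega))
        exact ((hPc.affine_preimage ((AffineMap.id ℝ ℝ).prod (AffineMap.const ℝ ℝ y))).ordConnected.out
          hi hk) ⟨h1, h2⟩
    · rw [indicator_of_notMem hy, Finset.sum_eq_zero]
      · simp
      · intro m _
        rw [indicator_of_notMem (fun h => hy (hEs m h)), zero_mul]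
  refine (norm_integral_le_of_norm_le hiI (Eventually.of_forall hb)).trans ?_
  rw [integral_indicator measurableSet_Ioo]
  simp only [integral_const, MeasurableSet.univ, measureReal_restrict_apply, univ_inter,
    Real.volume_real_Ioo, smul_eq_mul, mul_one]
  rw [max_eq_left] <;> linarith

/-- If `S` is nondecreasing and `P` is open, convex and contained in a horizontal strip of width
`2ρ`, then the vertical displacement of `(S, F)` accumulated inside `P` is at most `2ρ`. -/
theorem curve_bound {F F' S : ℝ → ℝ} (hF : ∀ t, HasDerivAt F (F' t) t) (hF' : Continuous F')
    (hS : Continuous S)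
    {a b : ℝ} (hab : a < b) (hmono : MonotoneOn S (Icc a b)) {P : Set (ℝ × ℝ)} (hPo : IsOpen P)
    (hPc : Convex ℝ P) {c ρ : ℝ} (hρ : 0 ≤ ρ) (hPs : ∀ z ∈ P, |z.2 - c| < ρ) :
    |∫ t in a..b, P.indicator (fun _ => (1:ℝ)) (S t, F t) * F' t| ≤ 2 * ρ := by
  classical
  have hFc : Continuous F := continuous_iff_continuousAt.2 fun t => (hF t).continuousAt
  have hba : 0 < b - a := by linarith
  -- `M N t` is the index of the partition interval `(node N m, node N (m + 1)]` containing `t`.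
  set M : ℕ → ℝ → ℕ := fun N t => ⌈(t - a) * N / (b - a)⌉₊ - 1 with hM
  have hMeq : ∀ N > 0, ∀ m, ∀ t ∈ Ioc (node a b N m) (node a b N (m+1)), M N t = m := by
    intro N hN m t ht
    have hN' : (0:ℝ) < N := by exact_mod_cast hN
    have : ⌈(t - a) * N / (b - a)⌉₊ = m + 1 := by
      rw [Nat.ceil_eq_iff (by omega)]
      simp only [node, mem_Ioc] at ht
      obtain ⟨h1, h2⟩ := ht
      have h1' : (b - a) * m / N < t - a := by linarith
      have h2' : t - a ≤ (b - a) * ((m+1 : ℕ):ℝ) / N := by linarith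
      rw [div_lt_iff₀ hN'] at h1'
      rw [le_div_iff₀ hN'] at h2'
      rw [lt_div_iff₀ hba, div_le_iff₀ hba]
      push_cast at h2' ⊢
      constructor <;> nlinarith
    simp [hM, this]
  have hMmem : ∀ N > 0, ∀ t ∈ Ioc a b, M N t < N ∧
      t ∈ Ioc (node a b N (M N t)) (node a b N (M N t + 1)) := by
    intro N hN t ht
    have hN' : (0:ℝ) < N := by exact_mod_cast hN
    have hx : 0 < (t - a) * N / (b - a) := by
      have : 0 < t - a := by linarith [ht.1]
      positivity
    have hc0 : 0 < ⌈(t - a) * N / (b - a)⌉₊ := Nat.ceil_pos.2 hx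
    have hle : (t - a) * N / (b - a) ≤ N := by
      rw [div_le_iff₀ hba]; nlinarith [ht.2]
    have hcN : ⌈(t - a) * N / (b - a)⌉₊ ≤ N := Nat.ceil_le.2 hle
    obtain ⟨k, hk⟩ : ∃ k, ⌈(t - a) * N / (b - a)⌉₊ = k + 1 := ⟨_, (Nat.succ_pred_eq_of_pos hc0).symm⟩
    have hMk : M N t = k := by simp [hM, hk]
    rw [hMk]
    refine ⟨by omega, ?_⟩
    rw [Nat.ceil_eq_iff (by omega)] at hk
    obtain ⟨h1, h2⟩ := hk
    rw [lt_div_iff₀ hba] at h1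
    rw [div_le_iff₀ hba] at h2
    simp only [Nat.add_sub_cancel] at h1
    simp only [node, mem_Ioc]
    have e1 : (b - a) * k / N < t - a := by rw [div_lt_iff₀ hN']; linarith
    have e2 : t - a ≤ (b - a) * ((k+1:ℕ):ℝ) / N := by rw [le_div_iff₀ hN']; linarith
    constructor <;> linarith
  set Φ : ℕ → ℝ → ℝ := fun N t =>
    {y | (S (node a b N (M N t)), y) ∈ P ∧ (S (node a b N (M N t +1)), y) ∈ P}.indicator
        (fun _ => (1:ℝ)) (F t) * F' t with hΦ
  have hb : ∀ N > 0, IntervalIntegrable (Φ N) volume a b ∧ |∫ t in a..b, Φ N t| ≤ 2 * ρ := by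
    intro N hN
    refine node_bound hF hF' hab hmono hPo hPc hρ hPs N hN _ fun m hm t ht => ?_
    simp only [hΦ, hMeq N hN m t ht]
  have hlim : Tendsto (fun N => ∫ t in a..b, Φ N t) atTop
      (𝓝 (∫ t in a..b, P.indicator (fun _ => (1:ℝ)) (S t, F t) * F' t)) := by
    refine intervalIntegral.tendsto_integral_filter_of_dominated_convergence (fun t => ‖F' t‖)
      ?_ (Eventually.of_forall fun n => ?_) ?_ ?_
    · filter_upwards [eventually_gt_atTop 0] with N hN
      exact (hb N hN).1.aestronglyMeasurable_restrict_uIoc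
    · refine Eventually.of_forall fun t _ => ?_
      simp only [hΦ, norm_mul]
      refine mul_le_of_le_one_left (norm_nonneg _) ?_
      simp only [indicator]; split_ifs <;> simp
    · exact hF'.norm.intervalIntegrable _ _
    · refine Eventually.of_forall fun t ht => ?_
      rw [uIoc_of_le hab.le] at ht
      refine Tendsto.mul_const _ ?_
      refine tendsto_const_nhds.congr' ?_
      -- For `(S t, F t) ∈ P` openness of `P` gives convergence; otherwise convexity of the slice
      -- forces every approximating indicator to vanish at `t`.
      by_cases hP : (S t, F t) ∈ P
      · have hdist : Tendsto (fun N : ℕ => (b - a) / N) atTop (𝓝 0) :=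
          tendsto_const_div_atTop_nhds_zero_nat _
        have hgap : ∀ N : ℕ, 0 < N → node a b N (M N t + 1) = node a b N (M N t) + (b - a) / N := by
          intro N _
          simp only [node]; push_cast; ring
        have hlo : Tendsto (fun N => node a b N (M N t)) atTop (𝓝 t) := by
          refine tendsto_of_tendsto_of_tendsto_of_le_of_le' (g := fun N : ℕ => t - (b - a) / N)
            (h := fun _ => t) (by simpa using hdist.const_sub t) tendsto_const_nhds ?_ ?_
          all_goals
            filter_upwards [eventually_gt_atTop 0] with N hN
            have h1 := (hMmem N hN t ht).2
            have h2 := hgap N hN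
            have h3 := h1.1
            have h4 := h1.2
            linarith
        have hhi : Tendsto (fun N => node a b N (M N t + 1)) atTop (𝓝 t) := by
          have := hlo.add hdist
          rw [add_zero] at this
          refine this.congr' ?_
          filter_upwards [eventually_gt_atTop 0] with N hN
          exact (hgap N hN).symm
        have hopen : {s | (S s, F t) ∈ P} ∈ 𝓝 t :=
          (hPo.preimage (by fun_prop : Continuous fun s => (S s, F t))).mem_nhds hP
        filter_upwards [hlo hopen, hhi hopen] with N h1 h2
        rw [indicator_of_mem hP, indicator_of_mem]
        exact ⟨h1, h2⟩
      · filter_upwards [eventually_gt_atTop 0] with N hN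
        obtain ⟨h1, h2⟩ := hMmem N hN t ht
        rw [indicator_of_notMem hP, indicator_of_notMem]
        rintro ⟨h3, h4⟩
        refine hP ?_
        have hN' : (0:ℝ) < N := by exact_mod_cast hN
        have hI : ∀ m ≤ N, node a b N m ∈ Icc a b := by
          intro m hm
          have h5 : (m:ℝ) ≤ N := by exact_mod_cast hm
          have h6 : (b - a) * m / N ≤ b - a := by
            rw [div_le_iff₀ hN']; nlinarith
          have h7 : 0 ≤ (b - a) * m / N := by positivity
          simp only [node, mem_Icc]; constructor <;> linarith
        have h5 := hmono (hI _ h1.le) ⟨ht.1.le, ht.2⟩ h2.1.le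
        have h6 := hmono ⟨ht.1.le, ht.2⟩ (hI _ h1) h2.2
        exact ((hPc.affine_preimage ((AffineMap.id ℝ ℝ).prod
          (AffineMap.const ℝ ℝ (F t)))).ordConnected.out h3 h4) ⟨h5, h6⟩
  refine le_of_tendsto hlim.abs ?_
  filter_upwards [eventually_gt_atTop 0] with N hN
  exact (hb N hN).2

/-! ### Plane geometry -/

theorem inner_coord (u v : E2) : ⟪u, v⟫ = u 0 * v 0 + u 1 * v 1 := by
  simp [PiLp.inner_apply, Fin.sum_univ_two, mul_comm]

theorem perp_zero (v : E2) : perp v 0 = -(v 1) := by simp [perp]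

theorem perp_one (v : E2) : perp v 1 = v 0 := by simp [perp]

theorem sq_of_norm_one {v : E2} (hv : ‖v‖ = 1) : v 0 * v 0 + v 1 * v 1 = 1 := by
  rw [← inner_coord, real_inner_self_eq_norm_sq, hv]; norm_num

theorem norm_perp {v : E2} (hv : ‖v‖ = 1) : ‖perp v‖ = 1 := by
  have h : ‖perp v‖ ^ 2 = 1 := by
    rw [← real_inner_self_eq_norm_sq, inner_coord, perp_zero, perp_one]
    linarith [sq_of_norm_one hv]
  nlinarith [norm_nonneg (perp v)]

theorem inner_perp_self (v : E2) : ⟪v, perp v⟫ = 0 := by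
  rw [inner_coord, perp_zero, perp_one]; ring

theorem decomp {v : E2} (hv : ‖v‖ = 1) (z : E2) : ⟪z, v⟫ • v + ⟪z, perp v⟫ • perp v = z := by
  have h := sq_of_norm_one hv
  ext i
  fin_cases i
  · simp only [inner_coord, perp_zero, perp_one, PiLp.add_apply, PiLp.smul_apply, smul_eq_mul,
      Fin.zero_eta]
    linear_combination (z 0) * h
  · simp only [inner_coord, perp_zero, perp_one, PiLp.add_apply, PiLp.smul_apply, smul_eq_mul,
      Fin.mk_one]
    linear_combination (z 1) * h

/-- The cone around `w` of angle at most `π/4` containing `e` and the cone containing `v` have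
half-angles adding up to at most `π/2`, so `v` and `e` never form an obtuse angle. -/
theorem inner_nonneg_of_cones {w : E2} (hw : ‖w‖ = 1) {η δ : ℝ} (hη' : η ≤ 1 - 1 / Real.sqrt 2)
    (hδ : δ ∈ Set.Ioo (0:ℝ) 1) (hδ' : 1 / 2 ≤ (1 - δ) - Real.sqrt (δ * (2 - δ)))
    {e v : E2} (he : e ∈ cone w η) (hv : v ∈ cone w δ) : 0 ≤ ⟪v, e⟫ := by
  obtain ⟨hδ0, hδ1⟩ := hδ
  have hw2 := sq_of_norm_one hw
  have he2 := sq_of_norm_one (mem_sphere_zero_iff_norm.1 he.1)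
  have hv2 := sq_of_norm_one (mem_sphere_zero_iff_norm.1 hv.1)
  have hc1 : 1 / Real.sqrt 2 ≤ ⟪e, w⟫ := by linarith [he.2]
  have hc2 : 1 - δ ≤ ⟪v, w⟫ := hv.2
  have hs2 : (1 / Real.sqrt 2) ^ 2 = 1 / 2 := by
    rw [div_pow, Real.sq_sqrt (by norm_num)]; norm_num
  have hs0 : 0 < 1 / Real.sqrt 2 := by positivity
  have p1 : ⟪e, w⟫ ^ 2 + ⟪e, perp w⟫ ^ 2 = 1 := by
    simp only [inner_coord, perp_zero, perp_one]
    linear_combination (e 0 * e 0 + e 1 * e 1) * hw2 + he2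
  have p2 : ⟪v, w⟫ ^ 2 + ⟪v, perp w⟫ ^ 2 = 1 := by
    simp only [inner_coord, perp_zero, perp_one]
    linear_combination (v 0 * v 0 + v 1 * v 1) * hw2 + hv2
  have p3 : ⟪v, e⟫ = ⟪e, w⟫ * ⟪v, w⟫ + ⟪e, perp w⟫ * ⟪v, perp w⟫ := by
    simp only [inner_coord, perp_zero, perp_one]
    linear_combination -(v 0 * e 0 + v 1 * e 1) * hw2
  have b1 : |⟪e, perp w⟫| ≤ ⟪e, w⟫ := abs_le_of_sq_le_sq (by nlinarith) (by linarith)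
  have hsq : 0 ≤ Real.sqrt (δ * (2 - δ)) := Real.sqrt_nonneg _
  have hsq2 : Real.sqrt (δ * (2 - δ)) ^ 2 = δ * (2 - δ) := Real.sq_sqrt (by nlinarith)
  have b2 : |⟪v, perp w⟫| ≤ ⟪v, w⟫ := abs_le_of_sq_le_sq (by nlinarith) (by linarith)
  have b3 : |⟪e, perp w⟫ * ⟪v, perp w⟫| ≤ ⟪e, w⟫ * ⟪v, w⟫ := by
    rw [abs_mul]
    exact mul_le_mul b1 b2 (abs_nonneg _) (by linarith)
  rw [p3]
  linarith [neg_abs_le (⟪e, perp w⟫ * ⟪v, perp w⟫)]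

theorem convex_tube (ρ : ℝ) (x e : E2) : Convex ℝ (Metric.thickening ρ (line x e)) := by
  refine Convex.thickening ?_ ρ
  rintro _ ⟨s, rfl⟩ _ ⟨t, rfl⟩ α β _ _ hαβ
  refine ⟨α * s + β * t, ?_⟩
  have : β = 1 - α := by linarith
  subst this
  module

theorem tube_subset {ρ : ℝ} {x e : E2} (he : ‖e‖ = 1) {z : E2}
    (hz : z ∈ Metric.thickening ρ (line x e)) : |⟪z, perp e⟫ - ⟪x, perp e⟫| < ρ := by
  obtain ⟨_, ⟨t, rfl⟩, hy⟩ := Metric.mem_thickening_iff.1 hz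
  have h : ⟪z, perp e⟫ - ⟪x, perp e⟫ = ⟪z - (x + t • e), perp e⟫ := by
    rw [inner_sub_left, inner_add_left, inner_smul_left, inner_perp_self]; simp
  rw [h]
  refine (abs_real_inner_le_norm _ _).trans_lt ?_
  rwa [norm_perp he, mul_one, ← dist_eq_norm]

/-- A `C¹` curve on `[a, b]` extends to a `C¹` curve on `ℝ`. -/
theorem exists_extension {a b : ℝ} (hab : a < b) {γ γ' : ℝ → E2}
    (hγ : ContinuousOn γ' (Set.Icc a b))
    (hderiv : ∀ t ∈ Set.Icc a b, HasDerivWithinAt γ (γ' t) (Set.Icc a b) t) :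
    ∃ c c' : ℝ → E2, Continuous c' ∧ (∀ t, HasDerivAt c (c' t) t) ∧
      (∀ t ∈ Icc a b, c t = γ t) ∧ ∀ t ∈ Icc a b, c' t = γ' t := by
  set c' : ℝ → E2 := IccExtend hab.le ((Icc a b).domRestrict γ') with hc'
  have hcont : Continuous c' := (continuousOn_iff_continuous_domRestrict.1 hγ).Icc_extend'
  have heq : ∀ t ∈ Icc a b, c' t = γ' t := fun t ht => by
    rw [hc', IccExtend_of_mem _ _ ht]; rfl
  refine ⟨fun t => γ a + ∫ s in a..t, c' s, c', hcont, fun t => ?_, fun t ht => ?_, heq⟩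
  · exact (intervalIntegral.integral_hasDerivAt_right (hcont.intervalIntegrable _ _)
      hcont.aestronglyMeasurable.stronglyMeasurableAtFilter hcont.continuousAt).const_add _
  · have h := intervalIntegral.integral_eq_sub_of_hasDeriv_right_of_le ht.1 (f := γ) (f' := c')
      (fun s hs => ((hderiv s ⟨hs.1, hs.2.trans ht.2⟩).continuousWithinAt).mono
        (Icc_subset_Icc_right ht.2)) (fun s hs => ?_) (hcont.intervalIntegrable _ _)
    · simp only [h]; abel
    · have hs' : s ∈ Ioo a b := ⟨hs.1, hs.2.trans_le ht.2⟩
      rw [heq s (Ioo_subset_Icc_self hs')]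
      exact ((hderiv s (Ioo_subset_Icc_self hs')).hasDerivAt
        (Icc_mem_nhds hs'.1 hs'.2)).hasDerivWithinAt

/-- The geometric core: along a curve that never moves backwards in the direction `e`, the
`e^⊥`-component of the velocity, integrated over the time spent in a convex open subset of the
`ρ`-tube around a line of direction `e`, is at most `2ρ` in absolute value. -/
theorem plane_bound {a b : ℝ} (hab : a < b) {c c' : ℝ → E2} (hc' : Continuous c')
    (hc : ∀ t, HasDerivAt c (c' t) t) {x e : E2} (he : ‖e‖ = 1) {ρ : ℝ} (hρ : 0 ≤ ρ)
    (hmono : ∀ t ∈ Icc a b, 0 ≤ ⟪c' t, e⟫) {C : Set E2} (hCo : IsOpen C) (hCc : Convex ℝ C)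
    (hCs : C ⊆ Metric.thickening ρ (line x e)) :
    |∫ t in c ⁻¹' C, ⟪c' t, perp e⟫ ∂(volume.restrict (Icc a b))| ≤ 2 * ρ := by
  have hcc : Continuous c := continuous_iff_continuousAt.2 fun t => (hc t).continuousAt
  have hder : ∀ v : E2, ∀ t, HasDerivAt (fun t => ⟪c t, v⟫) ⟪c' t, v⟫ t := fun v t => by
    simpa using (hc t).inner ℝ (hasDerivAt_const t v)
  have hS : MonotoneOn (fun t => ⟪c t, e⟫) (Icc a b) := by
    refine monotoneOn_of_hasDerivWithinAt_nonneg (convex_Icc a b) (f' := fun t => ⟪c' t, e⟫)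
      (by fun_prop) (fun t _ => (hder e t).hasDerivWithinAt) fun t ht => ?_
    exact hmono t (interior_subset ht)
  -- `L` is the isometry taking orthonormal coordinates along `(e, e^⊥)` to points of the plane.
  set L : ℝ × ℝ →ₗ[ℝ] E2 :=
    (LinearMap.fst ℝ ℝ ℝ).smulRight e + (LinearMap.snd ℝ ℝ ℝ).smulRight (perp e) with hL
  have hLa : ∀ z : E2, L (⟪z, e⟫, ⟪z, perp e⟫) = z := fun z => decomp he z
  have hL2 : ∀ q : ℝ × ℝ, ⟪L q, perp e⟫ = q.2 := fun q => by
    simp only [hL, LinearMap.add_apply, LinearMap.smulRight_apply, LinearMap.fst_apply,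
      LinearMap.snd_apply, inner_add_left, real_inner_smul_left, inner_perp_self,
      real_inner_self_eq_norm_sq, norm_perp he]
    ring
  have hLc : Continuous L := L.continuous_of_finiteDimensional
  have key := curve_bound (hder (perp e)) (by fun_prop) (S := fun t => ⟪c t, e⟫) (by fun_prop) hab
    hS (hCo.preimage hLc) (hCc.linear_preimage L) (c := ⟪x, perp e⟫) hρ (fun q hq => by
      have := tube_subset he (hCs hq)
      rwa [hL2] at this)
  refine le_trans (le_of_eq ?_) key
  congr 1
  rw [← integral_indicator (hCo.preimage hcc).measurableSet, integral_Icc_eq_integral_Ioc,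
    ← intervalIntegral.integral_of_le hab.le]
  refine intervalIntegral.integral_congr fun t _ => ?_
  by_cases ht : c t ∈ C
  · simp [indicator, hLa, ht]
  · simp [indicator, hLa, ht]

/-! ### Sets determined by membership patterns -/

/-- The set of indices `j < n` with `t ∈ T j`. -/
def patt (T : ℕ → Set ℝ) (n : ℕ) (t : ℝ) : Set ℕ := {j | j < n ∧ t ∈ T j}

theorem patt_succ_of_mem {T : ℕ → Set ℝ} {n : ℕ} {t : ℝ} (h : t ∈ T n) :
    patt T (n + 1) t = insert n (patt T n t) := by
  ext j
  simp only [patt, mem_ofPred_eq, mem_insert_iff]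
  constructor
  · rintro ⟨h1, h2⟩
    rcases Nat.lt_succ_iff_lt_or_eq.1 h1 with h3 | h3
    · exact Or.inr ⟨h3, h2⟩
    · exact Or.inl h3
  · rintro (rfl | ⟨h1, h2⟩)
    · exact ⟨Nat.lt_succ_self _, h⟩
    · exact ⟨by omega, h2⟩

theorem patt_succ_of_notMem {T : ℕ → Set ℝ} {n : ℕ} {t : ℝ} (h : t ∉ T n) :
    patt T (n + 1) t = patt T n t := by
  ext j
  simp only [patt, mem_ofPred_eq]
  constructor
  · rintro ⟨h1, h2⟩
    refine ⟨lt_of_le_of_ne (Nat.lt_succ_iff.1 h1) ?_, h2⟩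
    rintro rfl
    exact h h2
  · rintro ⟨h1, h2⟩
    exact ⟨by omega, h2⟩

/-- If `𝒞` is stable under intersection with every `T n` and the integral of `g` over members of `𝒞`
is bounded by `M`, then over the part of a member cut out by any condition on the memberships in
`T 0, …, T (n - 1)` it is bounded by `3 ^ n * M`. Each step splits along `T n`, and the part outside
`T n` is a difference of two sets already controlled. -/
theorem patt_bound {μ : Measure ℝ} {T : ℕ → Set ℝ} (hT : ∀ n, MeasurableSet (T n)) {g : ℝ → ℝ}
    (hg : Integrable g μ) {𝒞 : Set (Set ℝ)} (hm : ∀ C ∈ 𝒞, MeasurableSet C)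
    (hi : ∀ C ∈ 𝒞, ∀ n, C ∩ T n ∈ 𝒞) {M : ℝ} (hb : ∀ C ∈ 𝒞, |∫ t in C, g t ∂μ| ≤ M) (n : ℕ) :
    ∀ C ∈ 𝒞, ∀ Q : Set (Set ℕ), MeasurableSet {t | patt T n t ∈ Q} ∧
      |∫ t in C ∩ {t | patt T n t ∈ Q}, g t ∂μ| ≤ 3 ^ n * M := by
  induction n with
  | zero =>
    intro C hC Q
    have h0 : ∀ t, patt T 0 t = ∅ := fun t => by ext j; simp [patt]
    by_cases h : (∅ : Set ℕ) ∈ Q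
    · simpa [h0, h] using hb C hC
    · simpa [h0, h] using (abs_nonneg _).trans (hb C hC)
  | succ n ih =>
    intro C hC Q
    set W1 := {t | patt T n t ∈ {s : Set ℕ | insert n s ∈ Q}} with hW1
    set W0 := {t | patt T n t ∈ Q} with hW0
    have hX : {t | patt T (n + 1) t ∈ Q} = (W1 ∩ T n) ∪ (W0 \ T n) := by
      ext t
      by_cases h : t ∈ T n
      · simp [hW1, patt_succ_of_mem h, h]
      · simp [hW0, patt_succ_of_notMem h, h]
    obtain ⟨m1, b1⟩ := ih _ (hi C hC n) {s : Set ℕ | insert n s ∈ Q}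
    obtain ⟨m0, b0⟩ := ih C hC Q
    obtain ⟨-, b0'⟩ := ih _ (hi C hC n) Q
    rw [hX]
    refine ⟨(m1.inter (hT n)).union (m0.diff (hT n)), ?_⟩
    have e1 : C ∩ ((W1 ∩ T n) ∪ (W0 \ T n)) = ((C ∩ T n) ∩ W1) ∪ ((C ∩ W0) \ T n) := by
      ext t; simp only [mem_inter_iff, mem_union, Set.mem_sdiff]; tauto
    have e2 : C ∩ T n ∩ W0 = (C ∩ W0) ∩ T n := by
      ext t; simp only [mem_inter_iff]; tauto
    have i1 : ∫ t in C ∩ ((W1 ∩ T n) ∪ (W0 \ T n)), g t ∂μ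
        = (∫ t in C ∩ T n ∩ W1, g t ∂μ) + ∫ t in (C ∩ W0) \ T n, g t ∂μ := by
      rw [e1, setIntegral_union _ (((hm C hC).inter m0).diff (hT n)) hg.integrableOn hg.integrableOn]
      rw [Set.disjoint_left]
      rintro t ⟨⟨-, h1⟩, -⟩ ⟨-, h2⟩
      exact h2 h1
    have i2 := integral_inter_add_sdiff (μ := μ) (f := g) (s := C ∩ W0) (hT n) hg.integrableOn
    rw [← e2] at i2
    rw [i1, pow_succ]
    rw [abs_le] at *
    constructor <;> linarith [b1.1, b1.2, b0.1, b0.2, b0'.1, b0'.2]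

/-! ### The indices `k_p` and the σ-algebras `Σ_p` -/

theorem kseq_le_succ (B : ℕ → Set E2) (p : ℕ) (z : E2) : kseq B p z ≤ kseq B (p + 1) z := by
  refine le_sInf ?_
  rintro m ⟨k, rfl, h, -⟩
  exact h.le

theorem kseq_mono (B : ℕ → Set E2) (z : E2) : Monotone fun p => kseq B p z :=
  monotone_nat_of_le_succ fun p => kseq_le_succ B p z

theorem kseq_succ_spec {B : ℕ → Set E2} {p : ℕ} {z : E2} {k : ℕ} (h : kseq B (p + 1) z = k) :
    kseq B p z < k ∧ z ∈ B k := by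
  have hne : {m : ℕ∞ | ∃ k : ℕ, m = (k : ℕ∞) ∧ kseq B p z < (k : ℕ∞) ∧ z ∈ B k}.Nonempty := by
    by_contra hne
    rw [not_nonempty_iff_eq_empty] at hne
    simp only [kseq, hne, sInf_empty] at h
    exact ENat.top_ne_natCast k h
  have := csInf_mem hne
  obtain ⟨j, hj, h1, h2⟩ := this
  change kseq B (p + 1) z = j at hj
  rw [h] at hj
  have : k = j := by exact_mod_cast hj
  subst this
  exact ⟨h1, h2⟩

theorem le_kseq (B : ℕ → Set E2) (z : E2) (p : ℕ) : (p : ℕ∞) ≤ kseq B p z := by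
  induction p with
  | zero => simp
  | succ p ih =>
    refine le_sInf ?_
    rintro m ⟨k, rfl, h, -⟩
    have h2 := ih.trans_lt h
    have : p < k := by exact_mod_cast h2
    exact_mod_cast this

/-- Indices `k_q(z) ≤ k` depend only on the memberships of `z` in `B_0, …, B_k`. -/
theorem kseq_congr {B : ℕ → Set E2} {z z' : E2} {k : ℕ} (h : ∀ j ≤ k, (z ∈ B j ↔ z' ∈ B j))
    (q : ℕ) (hq : kseq B q z ≤ k) : kseq B q z' = kseq B q z := by
  induction q with
  | zero => rfl
  | succ q ih =>
    have ih' := ih ((kseq_le_succ B q z).trans hq)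
    obtain ⟨m, hm⟩ := ENat.ne_top_iff_exists.1 (ne_top_of_le_ne_top (ENat.natCast_ne_top k) hq)
    obtain ⟨h1, h2⟩ := kseq_succ_spec hm.symm
    have hmk : m ≤ k := by rw [← hm] at hq; exact_mod_cast hq
    have hle : kseq B (q + 1) z' ≤ m := sInf_le ⟨m, rfl, ih' ▸ h1, (h m hmk).1 h2⟩
    obtain ⟨m', hm'⟩ := ENat.ne_top_iff_exists.1 (ne_top_of_le_ne_top (ENat.natCast_ne_top m) hle)
    obtain ⟨h1', h2'⟩ := kseq_succ_spec hm'.symm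
    have hmk' : m' ≤ k := by
      rw [← hm'] at hle
      have : m' ≤ m := by exact_mod_cast hle
      omega
    have hle' : kseq B (q + 1) z ≤ m' := sInf_le ⟨m', rfl, ih' ▸ h1', (h m' hmk').2 h2'⟩
    rw [hm'] at hle'
    rw [← hm] at hle' ⊢
    exact le_antisymm hle hle'

/-- An event of `Σ_p` cannot separate two times with the same `k_0, …, k_p`. -/
theorem Sig_invariant {B : ℕ → Set E2} {γ : ℝ → E2} {p : ℕ} {G : Set ℝ}
    (hG : MeasurableSet[Sig B γ p] G) {t t' : ℝ}
    (h : ∀ q ≤ p, kseq B q (γ t) = kseq B q (γ t')) (ht : t ∈ G) : t' ∈ G := by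
  set Φ : ℝ → (ℕ → ℕ∞) := fun t q => if q ≤ p then kseq B q (γ t) else 0 with hΦ
  have hle : Sig B γ p ≤ MeasurableSpace.comap Φ ⊤ := by
    refine iSup₂_le fun q hq => ?_
    have hq' : q ≤ p := by simpa [Nat.lt_succ_iff] using hq
    rintro _ ⟨U, -, rfl⟩
    refine ⟨{f | f q ∈ U}, trivial, ?_⟩
    ext s
    simp [hΦ, hq']
  obtain ⟨U, -, rfl⟩ := hle _ hG
  have : Φ t = Φ t' := by
    ext q
    simp only [hΦ]
    split_ifs with hq
    · rw [h q hq]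
    · rfl
  change Φ t' ∈ U
  rw [← this]
  exact ht

theorem measurableSet_Sig_kseq (B : ℕ → Set E2) (γ : ℝ → E2) (p : ℕ) (k : ℕ∞) :
    MeasurableSet[Sig B γ p] {t | kseq B p (γ t) = k} := by
  have hle : MeasurableSpace.comap (fun t => kseq B p (γ t)) ⊤ ≤ Sig B γ p :=
    le_iSup₂_of_le (f := fun q (_ : q ∈ Finset.range (p + 1)) =>
      MeasurableSpace.comap (fun t => kseq B q (γ t)) ⊤) p (Finset.self_mem_range_succ p) le_rfl
  exact hle _ ⟨{k}, trivial, rfl⟩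

/-- On `{k_p = k}` (with positive index `p`) every event of `Σ_p` is determined by which of the
tubes `B_j`, `j < k`, contain `γ t`; hence `patt_bound` applies with the class of convex open
subsets of `B_k`, whose members are controlled by `plane_bound`. -/
theorem Sig_bound {w : E2} (hw : ‖w‖ = 1) {η δ : ℝ} (hη' : η ≤ 1 - 1 / Real.sqrt 2)
    {x e : ℕ → E2} (he : ∀ k, e k ∈ cone w η) {ρ : ℕ → ℝ} (hρ : ∀ k, 0 < ρ k)
    (hδ : δ ∈ Set.Ioo (0:ℝ) 1) (hδ' : 1 / 2 ≤ (1 - δ) - Real.sqrt (δ * (2 - δ)))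
    {a b : ℝ} (hab : a < b) {γ γ' : ℝ → E2} (hγ : ContinuousOn γ' (Set.Icc a b))
    (hderiv : ∀ t ∈ Set.Icc a b, HasDerivWithinAt γ (γ' t) (Set.Icc a b) t)
    (hdir : ∀ t ∈ Set.Icc a b, γ' t ∈ cone w δ)
    {B : ℕ → Set E2} (hB : ∀ k, B k = Metric.thickening (ρ k) (line (x k) (e k)))
    {p k : ℕ} {G : Set ℝ} (hG : MeasurableSet[Sig B γ (p + 1)] G)
    (hGk : ∀ t ∈ G, kseq B (p + 1) (γ t) = k) :
    |∫ t in G, ⟪γ' t, perp (e k)⟫ ∂(volume.restrict (Icc a b))| ≤ 3 ^ k * (2 * ρ k) := by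
  obtain ⟨c, c', hc', hc, hcγ, hcγ'⟩ := exists_extension hab hγ hderiv
  have hcc : Continuous c := continuous_iff_continuousAt.2 fun t => (hc t).continuousAt
  have hen : ∀ k, ‖e k‖ = 1 := fun k => mem_sphere_zero_iff_norm.1 (he k).1
  have hBo : ∀ k, IsOpen (B k) := fun k => hB k ▸ isOpen_thickening
  have hBc : ∀ k, Convex ℝ (B k) := fun k => hB k ▸ convex_tube _ _ _
  set μ := volume.restrict (Icc a b) with hμ
  set T : ℕ → Set ℝ := fun j => c ⁻¹' B j with hT
  set 𝒞 : Set (Set ℝ) := {X | ∃ C : Set E2, IsOpen C ∧ Convex ℝ C ∧ C ⊆ B k ∧ X = c ⁻¹' C} with h𝒞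
  have hg : Integrable (fun t => ⟪c' t, perp (e k)⟫) μ :=
    (by fun_prop : Continuous fun t => ⟪c' t, perp (e k)⟫).integrableOn_Icc
  have hpb := patt_bound (μ := μ) (T := T) (fun j => ((hBo j).preimage hcc).measurableSet) hg
    (𝒞 := 𝒞)
    (by rintro _ ⟨C, hCo, -, -, rfl⟩; exact (hCo.preimage hcc).measurableSet)
    (by
      rintro _ ⟨C, hCo, hCc, hCs, rfl⟩ n
      exact ⟨C ∩ B n, hCo.inter (hBo n), hCc.inter (hBc n), inter_subset_left.trans hCs, rfl⟩)
    (M := 2 * ρ k)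
    (by
      rintro _ ⟨C, hCo, hCc, hCs, rfl⟩
      refine plane_bound hab hc' hc (hen k) (hρ k).le (fun t ht => ?_) hCo hCc (hB k ▸ hCs)
      rw [hcγ' t ht]
      exact inner_nonneg_of_cones hw hη' hδ hδ' (he k) (hdir t ht))
    k (T k) ⟨B k, hBo k, hBc k, Subset.rfl, rfl⟩
    {s | ∃ t ∈ Icc a b, t ∈ G ∧ s = patt T k t}
  refine le_trans (le_of_eq ?_) hpb.2
  have hsets : ∀ t ∈ Icc a b, (t ∈ G ↔
      t ∈ T k ∩ {t | patt T k t ∈ {s | ∃ t ∈ Icc a b, t ∈ G ∧ s = patt T k t}}) := by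
    intro t ht
    have hTk : ∀ t ∈ Icc a b, t ∈ G → γ t ∈ B k := fun t _ htG => (kseq_succ_spec (hGk t htG)).2
    constructor
    · intro htG
      refine ⟨?_, t, ht, htG, rfl⟩
      simpa [hT, hcγ t ht] using hTk t ht htG
    · rintro ⟨h1, t', ht', htG', h2⟩
      refine Sig_invariant hG (t := t') (fun q hq => ?_) htG'
      refine (kseq_congr (k := k) (fun j hj => ?_) q ?_).symm
      · rcases hj.lt_or_eq with hj | rfl
        · have := Set.ext_iff.1 h2 j
          simp only [patt, mem_ofPred_eq, hj, true_and, hT, mem_preimage, hcγ t ht,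
            hcγ t' ht'] at this
          exact this.symm
        · have h3 : γ t ∈ B j := by simpa [hT, hcγ t ht] using h1
          exact iff_of_true (hTk t' ht' htG') h3
      · rw [← hGk t' htG']
        exact kseq_mono B (γ t') hq
  congr 1
  have hae : ∀ᵐ t ∂μ, t ∈ Icc a b := ae_restrict_mem measurableSet_Icc
  have h1 : (G : Set ℝ) =ᵐ[μ]
      (T k ∩ {t | patt T k t ∈ {s | ∃ t ∈ Icc a b, t ∈ G ∧ s = patt T k t}} : Set ℝ) := by
    filter_upwards [hae] with t ht
    exact propext (hsets t ht)
  rw [setIntegral_congr_set h1]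
  refine integral_congr_ae (ae_restrict_of_ae ?_)
  filter_upwards [hae] with t ht
  rw [hcγ' t ht]

/-- Markov's inequality for `|⟨E[g | m], v⟩|` on an event `K ∈ m`: it suffices to bound the
integrals of `⟨g, v⟩` over the events of `m` contained in `K`, since the sets where
`⟨E[g | m], v⟩` exceeds `ε` or is below `-ε` are such events. -/
theorem condExp_markov {Ω : Type*} {m m0 : MeasurableSpace Ω} {μ : Measure Ω} [IsFiniteMeasure μ]
    (hm : m ≤ m0) {g : Ω → E2} (hg : Integrable g μ) (v : E2) {K : Set Ω}
    (hK : MeasurableSet[m] K) {ε M : ℝ} (hε : 0 < ε)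
    (hM : ∀ G, MeasurableSet[m] G → G ⊆ K → |∫ t in G, ⟪g t, v⟫ ∂μ| ≤ M) :
    μ {t | t ∈ K ∧ ε < |⟪(μ[g|m]) t, v⟫|} ≤ ENNReal.ofReal (ε⁻¹ * (2 * M)) := by
  have hmeas : ∀ u : E2, StronglyMeasurable[m] fun t => ⟪(μ[g|m]) t, u⟫ := fun u =>
    (by fun_prop : Continuous fun z : E2 => ⟪z, u⟫).comp_stronglyMeasurable
      stronglyMeasurable_condExp
  have hone : ∀ u : E2, (∀ G, MeasurableSet[m] G → G ⊆ K → |∫ t in G, ⟪g t, u⟫ ∂μ| ≤ M) →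
      μ {t | t ∈ K ∧ ε < ⟪(μ[g|m]) t, u⟫} ≤ ENNReal.ofReal (ε⁻¹ * M) := by
    intro u hu
    set G := {t | t ∈ K ∧ ε < ⟪(μ[g|m]) t, u⟫} with hG
    have hGm : MeasurableSet[m] G :=
      MeasurableSet.inter hK ((hmeas u).measurable measurableSet_Ioi)
    have h1 : ∫ t in G, ⟪(μ[g|m]) t, u⟫ ∂μ = ∫ t in G, ⟪g t, u⟫ ∂μ := by
      have e1 := integral_inner (𝕜 := ℝ) (μ := μ.restrict G)
        (integrable_condExp (μ := μ) (m := m) (f := g)).integrableOn u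
      have e2 := integral_inner (𝕜 := ℝ) (μ := μ.restrict G) hg.integrableOn u
      rw [setIntegral_condExp hm hg hGm, ← e2] at e1
      simpa only [real_inner_comm] using e1
    have h2 : μ.real G * ε ≤ ∫ t in G, ⟪(μ[g|m]) t, u⟫ ∂μ := by
      rw [← smul_eq_mul, ← setIntegral_const]
      refine setIntegral_mono_on (integrable_const _).integrableOn
        (integrable_condExp.inner_const u).integrableOn (hm _ hGm) fun t ht => ht.2.le
    have h3 := (le_abs_self _).trans (hu G hGm fun t ht => ht.1)
    rw [← ofReal_measureReal]
    refine ENNReal.ofReal_le_ofReal ?_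
    rw [inv_mul_eq_div, le_div_iff₀ hε]
    linarith
  have hsub : {t | t ∈ K ∧ ε < |⟪(μ[g|m]) t, v⟫|} ⊆
      {t | t ∈ K ∧ ε < ⟪(μ[g|m]) t, v⟫} ∪ {t | t ∈ K ∧ ε < ⟪(μ[g|m]) t, -v⟫} := by
    rintro t ⟨h1, h2⟩
    rcases lt_abs.1 h2 with h | h
    · exact Or.inl ⟨h1, h⟩
    · exact Or.inr ⟨h1, by rwa [inner_neg_right]⟩
  have hM0 : 0 ≤ M :=
    (abs_nonneg _).trans (hM ∅ (@MeasurableSet.empty _ m) (empty_subset _))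
  refine (measure_mono hsub).trans ((measure_union_le _ _).trans ?_)
  have h2 := hone (-v) fun G hG hGK => by
    simp only [inner_neg_right, integral_neg, abs_neg]
    exact hM G hG hGK
  refine (add_le_add (hone v hM) h2).trans ?_
  rw [← ENNReal.ofReal_add (by positivity) (by positivity)]
  exact ENNReal.ofReal_le_ofReal (by linarith)

/-! ### Borel–Cantelli -/

/-- Under the Hypothesis, the set
`D = ⋂_n ⋃_{p≥n} D_p`, where
`D_p = {t ∈ I : k_p(γ(t)) < ∞, |⟨β_p(t), e_{k_p(γ(t))}^⊥⟩| > 2^{−p}}`,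
has Lebesgue measure zero. -/
theorem stmt8 (w : E2) (hw : w ∈ sphere (0:E2) 1)
    (η : ℝ) (hη : 0 < η) (hη' : η ≤ 1 - 1 / Real.sqrt 2)
    (x e : ℕ → E2) (he : ∀ k, e k ∈ cone w η)
    (ρ : ℕ → ℝ) (hρ : ∀ k, 0 < ρ k)
    (hsum : Summable fun k : ℕ => (3:ℝ) ^ k * ρ k)
    (hρcond : ∀ p : ℕ, 1 ≤ p →
      12 * ∑' k : {k : ℕ // p ≤ k}, (3:ℝ) ^ (k:ℕ) * ρ (k:ℕ) ≤ ((4:ℝ) ^ p)⁻¹)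
    (δ : ℝ) (hδ : δ ∈ Set.Ioo (0:ℝ) 1)
    (hδ' : 1 / 2 ≤ (1 - δ) - Real.sqrt (δ * (2 - δ)))
    (a b : ℝ) (hab : a < b) (γ γ' : ℝ → E2)
    (hγ : ContinuousOn γ' (Set.Icc a b))
    (hderiv : ∀ t ∈ Set.Icc a b, HasDerivWithinAt γ (γ' t) (Set.Icc a b) t)
    (hunit : ∀ t ∈ Set.Icc a b, ‖γ' t‖ = 1)
    (hdir : ∀ t ∈ Set.Icc a b, γ' t ∈ cone w δ)
    (B : ℕ → Set E2) (hB : ∀ k, B k = Metric.thickening (ρ k) (line (x k) (e k)))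
    (Dp : ℕ → Set ℝ)
    (hDp : ∀ p, Dp p = {t ∈ Set.Icc a b | kseq B p (γ t) < ⊤ ∧
      ((2:ℝ) ^ p)⁻¹ < |⟪beta B γ γ' a b p t, perp (e (kseq B p (γ t)).toNat)⟫|}) :
    volume (⋂ n : ℕ, ⋃ p, ⋃ _ : n ≤ p, Dp p) = 0 := by
  have hwn : ‖w‖ = 1 := mem_sphere_zero_iff_norm.1 hw
  set μ := volume.restrict (Icc a b) with hμ
  have hgi : Integrable (fun t => γ' t) μ := hγ.integrableOn_Icc
  have hbound : ∀ p : ℕ, volume (Dp (p + 1)) ≤ ENNReal.ofReal ((1 / 2 : ℝ) ^ (p + 1)) := by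
    intro p
    by_cases hm : Sig B γ (p + 1) ≤ Real.measurableSpace
    -- `γ` is arbitrary outside `[a, b]`, so `Sig` may contain non-Borel sets; the conditional
    -- expectation is then `0` by convention and `Dp (p + 1)` is empty.
    swap
    · have : Dp (p + 1) = ∅ := by
        rw [hDp, eq_empty_iff_forall_notMem]
        rintro t ⟨-, -, h⟩
        rw [beta, condExp_of_not_le hm] at h
        simp only [Pi.zero_apply, inner_zero_left, abs_zero] at h
        exact absurd h (not_lt.2 (by positivity))
      simp [this]
    set ε : ℝ := ((2:ℝ) ^ (p + 1))⁻¹ with hε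
    have hε0 : 0 < ε := by positivity
    set A : {k : ℕ // p + 1 ≤ k} → Set ℝ := fun k =>
      {t | t ∈ {t | kseq B (p + 1) (γ t) = ((k : ℕ) : ℕ∞)} ∧
        ε < |⟪(μ[(fun t => γ' t)|Sig B γ (p + 1)]) t, perp (e k)⟫|} with hA
    have hAm : ∀ k, μ (A k) ≤ ENNReal.ofReal (ε⁻¹ * (2 * (3 ^ (k:ℕ) * (2 * ρ k)))) := fun k =>
      condExp_markov hm hgi _ (measurableSet_Sig_kseq B γ (p + 1) k) hε0 fun G hG hGK =>
        Sig_bound hwn hη' he hρ hδ hδ' hab hγ hderiv hdir hB hG hGK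
    have hsub : Dp (p + 1) ⊆ (⋃ k, A k) ∩ Icc a b := by
      rw [hDp]
      rintro t ⟨ht, hlt, h⟩
      refine ⟨mem_iUnion.2 ?_, ht⟩
      obtain ⟨k, hk⟩ := ENat.ne_top_iff_exists.1 hlt.ne
      have hpk : p + 1 ≤ k := by
        have := le_kseq B (γ t) (p + 1)
        rw [← hk] at this
        exact_mod_cast this
      refine ⟨⟨k, hpk⟩, hk.symm, ?_⟩
      rw [← hk, ENat.toNat_natCast] at h
      exact h
    have hs' : Summable fun k : {k : ℕ // p + 1 ≤ k} => (3:ℝ) ^ (k:ℕ) * ρ (k:ℕ) :=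
      hsum.subtype _
    calc volume (Dp (p + 1)) ≤ volume ((⋃ k, A k) ∩ Icc a b) := measure_mono hsub
      _ = μ (⋃ k, A k) := (Measure.restrict_apply' measurableSet_Icc).symm
      _ ≤ ∑' k, μ (A k) := measure_iUnion_le _
      _ ≤ ∑' k : {k : ℕ // p + 1 ≤ k},
          ENNReal.ofReal ((4 * ε⁻¹) * ((3:ℝ) ^ (k:ℕ) * ρ (k:ℕ))) := by
        refine ENNReal.tsum_le_tsum fun k => (hAm k).trans (ENNReal.ofReal_le_ofReal ?_)
        exact le_of_eq (by ring)
      _ = ENNReal.ofReal (∑' k : {k : ℕ // p + 1 ≤ k},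
          (4 * ε⁻¹) * ((3:ℝ) ^ (k:ℕ) * ρ (k:ℕ))) := by
        refine (ENNReal.ofReal_tsum_of_nonneg (fun k => ?_) (hs'.mul_left _)).symm
        have := hρ k
        positivity
      _ ≤ ENNReal.ofReal ((1 / 2 : ℝ) ^ (p + 1)) := by
        refine ENNReal.ofReal_le_ofReal ?_
        rw [tsum_mul_left]
        have h1 := hρcond (p + 1) (by omega)
        have h4 : ((4:ℝ) ^ (p + 1))⁻¹ = ε * ε := by
          rw [hε, ← mul_inv, ← mul_pow]; norm_num
        rw [h4] at h1
        have h5 : (1 / 2 : ℝ) ^ (p + 1) = ε := by rw [hε, one_div, inv_pow]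
        rw [h5]
        set s := ∑' k : {k : ℕ // p + 1 ≤ k}, (3:ℝ) ^ (k:ℕ) * ρ (k:ℕ)
        have h6 : 4 * s ≤ ε * ε := by nlinarith [mul_pos hε0 hε0]
        calc 4 * ε⁻¹ * s = ε⁻¹ * (4 * s) := by ring
          _ ≤ ε⁻¹ * (ε * ε) := by gcongr
          _ = ε := by field_simp
  have hfin : ∑' p, volume (Dp (p + 1)) ≠ ⊤ := by
    refine ne_top_of_le_ne_top ?_ (ENNReal.tsum_le_tsum hbound)
    rw [← ENNReal.ofReal_tsum_of_nonneg (fun p => by positivity)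
      ((summable_nat_add_iff 1).2 summable_geometric_two)]
    exact ENNReal.ofReal_ne_top
  refine measure_mono_null ?_ (measure_limsup_atTop_eq_zero hfin)
  intro t ht
  rw [mem_limsup_iff_frequently_mem, frequently_atTop]
  intro n
  obtain ⟨p, hp⟩ := mem_iUnion.1 (mem_iInter.1 ht (n + 1))
  obtain ⟨hnp, hp⟩ := mem_iUnion.1 hp
  obtain ⟨q, rfl⟩ : ∃ q, p = q + 1 := ⟨p - 1, by omega⟩
  exact ⟨q, by omega, hp⟩

end
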